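/- arXiv:1506.02152 — 2 statements merged into one kernel-verified Lean document; each statement's English description precedes it below -/
import Mathlib

section
/- Let Λc ⊆ Λ be nested lattices in ℝⁿ with finite quotient group Λ/Λc of cardinality M, and let h1, h2 be nonzero coprime integers such that no nonzero element of Λ/Λc has order dividing h1 or h2. Let f : ℝⁿ → ℝ be a continuous, integrable probability density satisfying a decay bound f(x) ≤ C(1+‖x‖)^{−(n+δ)} for some C, δ > 0, and let ψ(t) = ∫_{ℝⁿ} f(x) e^{i⟨t,x⟩} dx be its characteristic function. Assume ψ(t) = 0 for every t outside the interior of the set (2/(|h1|+|h2|))·V(Λ̂c), where Λ̂c is the Fourier dual lattice of Λc and V(Λ̂c) its Voronoi region, and assume that the restriction of f to each coset of Λc in Λ is summable with finite positive total mass F(c) = Σ_{u∈c} f(u). For each coset x of Λc in Λ and each w ∈ ℝⁿ, define P_x(w) = (1/M) Σ_{cosets y of Λc in Λ} Σ_{u ∈ x, v ∈ y with h1·u + h2·v = w} (f(u)/F(x))·(f(v)/F(y)), i.e., P_x is the conditional distribution of W = h1·U + h2·V given message x, where U is drawn from coset x with probability proportional to f, V is drawn from a uniformly random coset y with probability proportional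 to f, independently. Then P_x(w) = P_{x'}(w) for all cosets x, x' of Λc in Λ and all w ∈ ℝⁿ; that is, the relay's observation h1·U + h2·V is statistically independent of the message X (perfect secrecy). -/
open scoped RealInnerProductSpace Pointwise
open MeasureTheory

noncomputable section

/-- The coset of `Λc` in `Λ` corresponding to an element `c` of the quotient group `Λ/Λc`,
viewed as a subset of `ℝⁿ`. -/
def coset {n : ℕ} (Λ Λc : AddSubgroup (EuclideanSpace ℝ (Fin n)))
    (c : Λ ⧸ Λc.addSubgroupOf Λ) : Set (EuclideanSpace ℝ (Fin n)) :=
  {u | ∃ hu : u ∈ Λ, (QuotientAddGroup.mk (⟨u, hu⟩ : Λ) : Λ ⧸ Λc.addSubgroupOf Λ) = c}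

/-- The total mass `F(c) = Σ_{u∈c} f(u)` of the density `f` on the coset `c`. -/
def cosetMass {n : ℕ} (Λ Λc : AddSubgroup (EuclideanSpace ℝ (Fin n)))
    (f : EuclideanSpace ℝ (Fin n) → ℝ) (c : Λ ⧸ Λc.addSubgroupOf Λ) : ℝ :=
  ∑' u : coset Λ Λc c, f u

/-- The conditional distribution of the relay's observation `W = h₁·U + h₂·V` given the
message (coset) `x`:
`P_x(w) = (1/M)·Σ_{cosets y} Σ_{u∈x, v∈y, h₁·u+h₂·v=w} (f(u)/F(x))·(f(v)/F(y))`,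
where `U` is drawn from the coset `x` and `V` from a uniformly random coset `y`, each with
probability proportional to `f`, independently. -/
def condDist {n : ℕ} (Λ Λc : AddSubgroup (EuclideanSpace ℝ (Fin n)))
    (f : EuclideanSpace ℝ (Fin n) → ℝ) (h₁ h₂ : ℤ)
    (x : Λ ⧸ Λc.addSubgroupOf Λ) (w : EuclideanSpace ℝ (Fin n)) : ℝ :=
  (1 / (Nat.card (Λ ⧸ Λc.addSubgroupOf Λ) : ℝ)) *
    ∑' y : Λ ⧸ Λc.addSubgroupOf Λ,
      ∑' p : {p : EuclideanSpace ℝ (Fin n) × EuclideanSpace ℝ (Fin n) //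
          p.1 ∈ coset Λ Λc x ∧ p.2 ∈ coset Λ Λc y ∧
            (h₁ : ℝ) • p.1 + (h₂ : ℝ) • p.2 = w},
        (f p.val.1 / cosetMass Λ Λc f x) * (f p.val.2 / cosetMass Λ Λc f y)

/-- The characteristic function `ψ(t) = ∫_{ℝⁿ} f(x)·e^{i⟨t,x⟩} dx` of the density `f`. -/
def charFn {n : ℕ} (f : EuclideanSpace ℝ (Fin n) → ℝ) (t : EuclideanSpace ℝ (Fin n)) : ℂ :=
  ∫ x : EuclideanSpace ℝ (Fin n), (f x : ℂ) * Complex.exp ((⟪t, x⟫ : ℂ) * Complex.I)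

/-- The Fourier dual lattice `Λ̂ = {t : ⟨t, λ⟩ ∈ 2πℤ for all λ ∈ Λ}`. -/
def fourierDual {n : ℕ} (Λ : Set (EuclideanSpace ℝ (Fin n))) : Set (EuclideanSpace ℝ (Fin n)) :=
  {t | ∀ l ∈ Λ, ∃ k : ℤ, ⟪t, l⟫ = 2 * Real.pi * k}

/-- The (closed) Voronoi region `V(L) = {x : ‖x‖ ≤ ‖x − μ‖ for all μ ∈ L}` of `L ⊆ ℝⁿ`. -/
def voronoi {n : ℕ} (L : Set (EuclideanSpace ℝ (Fin n))) : Set (EuclideanSpace ℝ (Fin n)) :=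
  {x | ∀ μ ∈ L, ‖x‖ ≤ ‖x - μ‖}

/-- coordinates mod 1 -/
def torMk {ι E : Type*} [Fintype ι] [NormedAddCommGroup E] [NormedSpace ℝ E]
    (b : Module.Basis ι ℝ E) (x : E) : UnitAddTorus ι := fun i => ((b.repr x i : ℝ) : UnitAddCircle)

lemma torMk_quot {ι E : Type*} [Fintype ι] [NormedAddCommGroup E] [NormedSpace ℝ E]
    [FiniteDimensional ℝ E] (b : Module.Basis ι ℝ E) : IsOpenQuotientMap (torMk b) := by
  have h1 : IsOpenQuotientMap (Pi.map (fun (_ : ι) (r : ℝ) => (r : UnitAddCircle))) :=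
    IsOpenQuotientMap.piMap fun i => QuotientAddGroup.isOpenQuotientMap_mk
  exact h1.comp b.equivFunL.toHomeomorph.isOpenQuotientMap

lemma torMk_eq {ι E : Type*} [Fintype ι] [NormedAddCommGroup E] [NormedSpace ℝ E]
    (b : Module.Basis ι ℝ E) (x y : E) :
    torMk b x = torMk b y ↔ x - y ∈ Submodule.span ℤ (Set.range b) := by
  rw [b.mem_span_iff_repr_mem ℤ, funext_iff]
  refine forall_congr' fun i => ?_
  simp only [torMk]
  rw [QuotientAddGroup.eq_iff_sub_mem, AddSubgroup.mem_zmultiples_iff]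
  simp

lemma poisson_const {ι E : Type*} [Fintype ι] [NormedAddCommGroup E] [NormedSpace ℝ E]
    [FiniteDimensional ℝ E] [MeasurableSpace E] [BorelSpace E] (b : Module.Basis ι ℝ E)
    (g : E → ℂ) (hg : Continuous g)
    (hi : Integrable g (Measure.map b.equivFunL.symm volume))
    (hb : ∀ R : ℝ, ∃ u : Submodule.span ℤ (Set.range b) → ℝ, Summable u ∧
      ∀ x : E, ‖x‖ ≤ R → ∀ l : Submodule.span ℤ (Set.range b), ‖g (l + x)‖ ≤ u l)
    (hz : ∀ k : ι → ℤ, k ≠ 0 → ∫ x, UnitAddTorus.mFourier (-k) (torMk b x) * g x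
      ∂(Measure.map b.equivFunL.symm volume) = 0) (x : E) :
    ∑' l : Submodule.span ℤ (Set.range b), g (l + x) =
      ∑' l : Submodule.span ℤ (Set.range b), g l := by
  set L := Submodule.span ℤ (Set.range b) with hL
  set μ : Measure E := Measure.map b.equivFunL.symm volume with hμ
  have : μ.IsAddHaarMeasure := ContinuousLinearEquiv.isAddHaarMeasure_map _ _
  have hrepr : ∀ (a : ι → ℝ) i, b.repr (b.equivFunL.symm a) i = a i := fun a i =>
    congrFun (b.equivFun.apply_symm_apply a) i
  have : VAddInvariantMeasure L E μ :=
    inferInstanceAs (VAddInvariantMeasure L.toAddSubgroup E μ)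
  have hcL : Countable L := by
    infer_instance
  let P : E → ℂ := fun x => ∑' l : L, g (l + x)
  have hPc : Continuous P := by
    rw [← continuousOn_univ, ← Metric.iUnion_ball_nat (0 : E)]
    refine ContinuousOn.iUnion_of_isOpen (fun n => ?_) (fun n => Metric.isOpen_ball)
    obtain ⟨u, hu, hu'⟩ := hb n
    refine continuousOn_tsum (u := u) (fun l => by fun_prop) hu fun l y hy => ?_
    exact hu' y (by simpa using (mem_ball_zero_iff.1 hy).le) l
  have hPp : ∀ x y : E, torMk b x = torMk b y → P x = P y := by
    intro x y h
    rw [torMk_eq] at h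
    refine Eq.trans ?_ (Equiv.tsum_eq (Equiv.addRight (⟨x - y, h⟩ : L)) (fun l : L => g (l + y)))
    refine tsum_congr fun l => ?_
    simp [add_assoc]
  obtain ⟨Q, hQ⟩ : ∃ Q : C(UnitAddTorus ι, ℂ), ∀ x, Q (torMk b x) = P x := by
    refine ⟨(torMk_quot b).isQuotientMap.lift (f := ⟨torMk b, (torMk_quot b).continuous⟩) ⟨P, hPc⟩ fun x y h => hPp x y h, fun x => ?_⟩
    have := (torMk_quot b).isQuotientMap.lift_comp (f := ⟨torMk b, (torMk_quot b).continuous⟩)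
      ⟨P, hPc⟩ (fun x y h => hPp x y h)
    exact congrArg (fun F : C(E, ℂ) => F x) this
  have hcoef : ∀ k : ι → ℤ, k ≠ 0 → UnitAddTorus.mFourierCoeff Q k = 0 := by
    intro k hk
    rw [UnitAddTorus.mFourierCoeff_eq_integral Q k 0]
    have e1 : {x : ι → ℝ | ∀ i, x i ∈ Set.Ioc ((0 : ι → ℝ) i) ((0 : ι → ℝ) i + 1)}
        =ᵐ[volume] Set.pi Set.univ fun _ : ι ↦ Set.Ico (0 : ℝ) 1 := by
      have e2 : {x : ι → ℝ | ∀ i, x i ∈ Set.Ioc ((0 : ι → ℝ) i) ((0 : ι → ℝ) i + 1)}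
        = Set.pi Set.univ fun i : ι ↦ Set.Ioc ((0 : ι → ℝ) i) ((1 : ι → ℝ) i) := by
        ext; simp
      rw [e2]
      exact (Measure.univ_pi_Ioc_ae_eq_Icc (μ := fun _ : ι => (volume : Measure ℝ))).trans
        (Measure.univ_pi_Ico_ae_eq_Icc (μ := fun _ : ι => (volume : Measure ℝ))
          (f := fun _ : ι => (0 : ℝ)) (g := fun _ => 1)).symm
    rw [setIntegral_congr_set e1]
    have e3 : ∫ a in Set.pi Set.univ fun _ : ι ↦ Set.Ico (0 : ℝ) 1,
        UnitAddTorus.mFourier (-k) (fun i => (a i : UnitAddCircle)) •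
          Q (fun i => (a i : UnitAddCircle)) =
        ∫ y in ZSpan.fundamentalDomain b, UnitAddTorus.mFourier (-k) (torMk b y) * P y ∂μ := by
      rw [hμ, setIntegral_map (ZSpan.fundamentalDomain_measurableSet b)]
      · have : b.equivFunL.symm ⁻¹' (ZSpan.fundamentalDomain b) =
          Set.pi Set.univ fun _ : ι ↦ Set.Ico (0 : ℝ) 1 := by
          ext a
          simp [ZSpan.mem_fundamentalDomain, hrepr]
        rw [this]
        refine setIntegral_congr_fun (MeasurableSet.univ_pi fun _ => measurableSet_Ico) ?_
        intro a _
        have : torMk b (b.equivFunL.symm a) = fun i => (a i : UnitAddCircle) := by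
          ext i; simp [torMk, hrepr]
        simp [← hQ, this]
      · refine Continuous.aestronglyMeasurable ?_
        have := (torMk_quot b).continuous
        fun_prop
      · exact (b.equivFunL.symm.continuous.measurable).aemeasurable
    rw [e3]
    have hTc := (torMk_quot b).continuous
    have hFn : ∀ y, ‖UnitAddTorus.mFourier (-k) (torMk b y)‖ ≤ 1 := fun y => by
      simpa [UnitAddTorus.mFourier_norm] using
        ContinuousMap.norm_coe_le_norm (UnitAddTorus.mFourier (-k)) (torMk b y)
    have hint : Integrable (fun y => UnitAddTorus.mFourier (-k) (torMk b y) * g y) μ := by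
      refine hi.bdd_mul (c := 1) ?_ (Filter.Eventually.of_forall hFn)
      exact Continuous.aestronglyMeasurable (by fun_prop)
    rw [← hz k hk, (ZSpan.isAddFundamentalDomain b μ).integral_eq_tsum'' _ hint]
    obtain ⟨R, hR⟩ := (ZSpan.fundamentalDomain_isBounded b).exists_norm_le
    obtain ⟨u, hu, hu'⟩ := hb R
    have e4 : ∀ l : L, ∀ y : E, torMk b (l +ᵥ y) = torMk b y := by
      intro l y
      rw [torMk_eq]
      simp [Submodule.vadd_def]
    have hfin : μ (ZSpan.fundamentalDomain b) ≠ ⊤ :=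
      (ZSpan.fundamentalDomain_isBounded b).measure_lt_top.ne
    have hms := ZSpan.fundamentalDomain_measurableSet b
    have := hasSum_integral_of_summable_integral_norm (μ := μ.restrict (ZSpan.fundamentalDomain b))
      (F := fun (l : L) y => UnitAddTorus.mFourier (-k) (torMk b (l +ᵥ y)) * g (l +ᵥ y)) ?_ ?_
    · rw [this.tsum_eq]
      refine setIntegral_congr_fun hms fun y _ => ?_
      simp only [e4]
      rw [tsum_mul_left]
      rfl
    · intro l
      have : Integrable (fun y => UnitAddTorus.mFourier (-k) (torMk b (l +ᵥ y)) * g (l +ᵥ y)) μ :=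
        (measurePreserving_vadd l μ).integrable_comp_of_integrable hint
      exact this.integrableOn
    · refine Summable.of_nonneg_of_le (fun l => integral_nonneg fun _ => norm_nonneg _) (fun l => ?_)
        (hu.mul_right (μ.real (ZSpan.fundamentalDomain b)))
      refine (Real.le_norm_self _).trans (norm_setIntegral_le_of_norm_le_const hfin.lt_top ?_)
      intro y hy
      rw [norm_norm, norm_mul]
      calc _ ≤ 1 * u l := by
            refine mul_le_mul (hFn _) (hu' y (hR y hy) l) (norm_nonneg _) zero_le_one
        _ = u l := one_mul _
  have hs : ∀ t, HasSum (fun i ↦ UnitAddTorus.mFourierCoeff Q i • UnitAddTorus.mFourier i t) (Q t) :=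
    fun t => UnitAddTorus.hasSum_mFourier_series_apply_of_summable
      (summable_of_ne_finset_zero (s := {0}) fun k hk => hcoef k (by simpa using hk)) t
  have hconst : ∀ t, Q t = UnitAddTorus.mFourierCoeff Q 0 := by
    intro t
    refine (hs t).unique ?_
    convert hasSum_single (0 : ι → ℤ) ?_ using 1
    · simp [UnitAddTorus.mFourier_zero]
    · intro k hk; simp [hcoef k hk]
  have : P x = P 0 := by rw [← hQ, ← hQ, hconst, hconst]
  simpa [P] using this

/-- A basis of the lattice with its dual vectors. -/
lemma exists_latticeBasis {n : ℕ} (Λc : AddSubgroup (EuclideanSpace ℝ (Fin n)))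
    [DiscreteTopology Λc] (hspan : Submodule.span ℝ (Λc : Set (EuclideanSpace ℝ (Fin n))) = ⊤) :
    ∃ (ι : Type) (_ : Fintype ι) (b : Module.Basis ι ℝ (EuclideanSpace ℝ (Fin n)))
      (τ : ι → EuclideanSpace ℝ (Fin n)),
      (∀ x, x ∈ Submodule.span ℤ (Set.range b) ↔ x ∈ Λc) ∧
      (∀ i x, ⟪τ i, x⟫ = 2 * Real.pi * b.repr x i) := by
  let L : Submodule ℤ (EuclideanSpace ℝ (Fin n)) := AddSubgroup.toIntSubmodule Λc
  have : DiscreteTopology L := inferInstanceAs (DiscreteTopology Λc)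
  have : IsZLattice ℝ L := ⟨hspan⟩
  let b := (Module.finBasis ℤ L).ofZLatticeBasis ℝ L
  refine ⟨_, inferInstance, b, fun i => (InnerProductSpace.toDual ℝ _).symm
    (LinearMap.toContinuousLinearMap ((2 * Real.pi) • b.coord i)), fun x => ?_, fun i x => ?_⟩
  · rw [Module.Basis.ofZLatticeBasis_span]
    rfl
  · rw [InnerProductSpace.toDual_symm_apply]
    simp

lemma dual_smul_mem {n : ℕ} {Λc : AddSubgroup (EuclideanSpace ℝ (Fin n))} {ι : Type} [Fintype ι]
    {b : Module.Basis ι ℝ (EuclideanSpace ℝ (Fin n))} {τ : ι → EuclideanSpace ℝ (Fin n)}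
    (h1 : ∀ x, x ∈ Submodule.span ℤ (Set.range b) ↔ x ∈ Λc)
    (h2 : ∀ i x, ⟪τ i, x⟫ = 2 * Real.pi * b.repr x i) (k : ι → ℤ) :
    ∑ i, (k i : ℝ) • τ i ∈ fourierDual (Λc : Set (EuclideanSpace ℝ (Fin n))) := by
  intro l hl
  have hl' := (h1 l).2 hl
  rw [b.mem_span_iff_repr_mem ℤ] at hl'
  choose m hm using hl'
  refine ⟨∑ i, k i * m i, ?_⟩
  simp only [sum_inner, real_inner_smul_left, h2, ← hm]
  push_cast
  rw [Finset.mul_sum]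
  refine Finset.sum_congr rfl fun i _ => ?_
  simp; ring

lemma fourierDual_neg {n : ℕ} {Λc : Set (EuclideanSpace ℝ (Fin n))}
    {t : EuclideanSpace ℝ (Fin n)} (ht : t ∈ fourierDual Λc) : -t ∈ fourierDual Λc := by
  intro l hl
  obtain ⟨k, hk⟩ := ht l hl
  exact ⟨-k, by rw [inner_neg_left, hk]; push_cast; ring⟩

lemma mem_voronoi_inner {n : ℕ} {D : Set (EuclideanSpace ℝ (Fin n))}
    {x t : EuclideanSpace ℝ (Fin n)} (hx : x ∈ voronoi D) (ht : t ∈ D) :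
    ⟪x, t⟫ ≤ ‖t‖ ^ 2 / 2 := by
  have h := hx t ht
  have h2 : ‖x‖ ^ 2 ≤ ‖x - t‖ ^ 2 := by gcongr
  rw [norm_sub_sq_real] at h2
  linarith

lemma mem_smul_voronoi_inner {n : ℕ} {D : Set (EuclideanSpace ℝ (Fin n))}
    {x t : EuclideanSpace ℝ (Fin n)} {α : ℝ} (hα : 0 < α) (hx : x ∈ α • voronoi D) (ht : t ∈ D) :
    ⟪x, t⟫ ≤ α * ‖t‖ ^ 2 / 2 := by
  obtain ⟨y, hy, rfl⟩ := hx
  have := mem_voronoi_inner hy ht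
  simp only [real_inner_smul_left]
  nlinarith

lemma mem_interior_inner {n : ℕ} {D : Set (EuclideanSpace ℝ (Fin n))}
    {x t : EuclideanSpace ℝ (Fin n)} {α : ℝ} (hα : 0 < α) (hx : x ∈ interior (α • voronoi D))
    (ht : t ∈ D) (h0 : t ≠ 0) : ⟪x, t⟫ < α * ‖t‖ ^ 2 / 2 := by
  have hc : Filter.Tendsto (fun ε : ℝ => x + ε • t) (nhdsWithin 0 (Set.Ioi 0)) (nhds x) := by
    have : Continuous (fun ε : ℝ => x + ε • t) := by fun_prop
    have := this.tendsto 0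
    simp only [zero_smul, add_zero] at this
    exact this.mono_left nhdsWithin_le_nhds
  have hev := (hc.eventually (mem_interior_iff_mem_nhds.1 hx)).and self_mem_nhdsWithin
  obtain ⟨ε, hε, hε0⟩ := hev.exists
  have h := mem_smul_voronoi_inner hα hε ht
  rw [inner_add_left, real_inner_smul_left, real_inner_self_eq_norm_sq] at h
  have : 0 < ‖t‖ ^ 2 := by positivity
  have : 0 < ε * ‖t‖ ^ 2 := mul_pos hε0 this
  linarith

lemma mem_interior_abs_inner {n : ℕ} {Λc : Set (EuclideanSpace ℝ (Fin n))}
    {x t : EuclideanSpace ℝ (Fin n)} {α : ℝ} (hα : 0 < α)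
    (hx : x ∈ interior (α • voronoi (fourierDual Λc)))
    (ht : t ∈ fourierDual Λc) (h0 : t ≠ 0) : |⟪x, t⟫| < α * ‖t‖ ^ 2 / 2 := by
  rw [abs_lt]
  have h1 := mem_interior_inner hα hx ht h0
  have h2 := mem_interior_inner hα hx (fourierDual_neg ht) (neg_ne_zero.2 h0)
  rw [inner_neg_right, norm_neg] at h2
  constructor <;> linarith

lemma voronoi_bounded {n : ℕ} (Λc : AddSubgroup (EuclideanSpace ℝ (Fin n)))
    [DiscreteTopology Λc] (hspan : Submodule.span ℝ (Λc : Set (EuclideanSpace ℝ (Fin n))) = ⊤) :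
    ∃ R, ∀ x ∈ voronoi (fourierDual (Λc : Set (EuclideanSpace ℝ (Fin n)))), ‖x‖ ≤ R := by
  obtain ⟨ι, _, b, τ, h1, h2⟩ := exists_latticeBasis Λc hspan
  classical
  have hτ : ∀ i, τ i ∈ fourierDual (Λc : Set (EuclideanSpace ℝ (Fin n))) := fun i => by
    simpa [Pi.single_apply] using dual_smul_mem h1 h2 (Pi.single i 1)
  refine ⟨∑ i, (‖τ i‖ ^ 2 / 2) * ‖b i‖, fun x hx => ?_⟩
  rw [← b.sum_repr x]
  refine norm_sum_le_of_le _ fun i _ => ?_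
  rw [norm_smul]
  gcongr
  have e1 := mem_voronoi_inner hx (hτ i)
  have e2 := mem_voronoi_inner hx (fourierDual_neg (hτ i))
  rw [inner_neg_right, norm_neg] at e2
  rw [real_inner_comm, h2] at e1 e2
  have hpi := Real.pi_gt_three
  have : |2 * Real.pi * b.repr x i| ≤ ‖τ i‖ ^ 2 / 2 := abs_le.2 ⟨by linarith, e1⟩
  rw [abs_mul, abs_of_pos (by positivity)] at this
  rw [Real.norm_eq_abs]
  nlinarith [abs_nonneg (b.repr x i)]

lemma poisson_lattice {n : ℕ} (Λc : AddSubgroup (EuclideanSpace ℝ (Fin n)))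
    [DiscreteTopology Λc] (hspan : Submodule.span ℝ (Λc : Set (EuclideanSpace ℝ (Fin n))) = ⊤)
    (g : EuclideanSpace ℝ (Fin n) → ℂ) (hg : Continuous g) (hi : Integrable g)
    (hb : ∀ R : ℝ, ∃ u : Λc → ℝ, Summable u ∧
      ∀ x, ‖x‖ ≤ R → ∀ l : Λc, ‖g (l + x)‖ ≤ u l)
    (hz : ∀ t ∈ fourierDual (Λc : Set (EuclideanSpace ℝ (Fin n))), t ≠ 0 →
      ∫ x, g x * Complex.exp ((⟪t, x⟫ : ℂ) * Complex.I) = 0) (x : EuclideanSpace ℝ (Fin n)) :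
    ∑' l : Λc, g (l + x) = ∑' l : Λc, g l := by
  obtain ⟨ι, _, b, τ, h1, h2⟩ := exists_latticeBasis Λc hspan
  let e : Submodule.span ℤ (Set.range b) ≃ Λc := Equiv.subtypeEquivRight h1
  have : (Measure.map b.equivFunL.symm volume).IsAddHaarMeasure :=
    ContinuousLinearEquiv.isAddHaarMeasure_map _ _
  have hμ := Measure.isAddLeftInvariant_eq_smul (Measure.map b.equivFunL.symm volume)
    (volume : Measure (EuclideanSpace ℝ (Fin n)))
  have key := poisson_const b g hg ?_ ?_ ?_ x
  · rw [← e.tsum_eq, ← e.tsum_eq]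
    exact key
  · rw [hμ]
    exact hi.smul_measure (by simp)
  · intro R
    obtain ⟨u, hu, hu'⟩ := hb R
    exact ⟨u ∘ e, (e.summable_iff).2 hu, fun x hx l => hu' x hx (e l)⟩
  · intro k hk
    rw [hμ, integral_smul_nnreal_measure]
    have ht := dual_smul_mem h1 h2 (-k)
    have h0 : ∑ i, ((-k) i : ℝ) • τ i ≠ 0 := by
      intro h
      apply hk
      ext j
      have := congrArg (fun v => ⟪v, b j⟫) h
      simp only [sum_inner, real_inner_smul_left, h2, inner_zero_left] at this
      rw [Finset.sum_eq_single j (fun i _ hij => by simp [Finsupp.single_apply, hij.symm])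
        (by simp)] at this
      simpa [Real.pi_ne_zero] using this
    have := hz _ ht (by exact_mod_cast h0)
    convert smul_zero _
    rw [← this]
    refine integral_congr_ae (Filter.Eventually.of_forall fun y => ?_)
    simp only
    rw [mul_comm]
    congr 1
    simp only [UnitAddTorus.mFourier, torMk, ContinuousMap.coe_mk, fourier_coe_apply,
      sum_inner, real_inner_smul_left, h2]
    rw [← Complex.exp_sum]
    congr 1
    push_cast
    rw [Finset.sum_mul]
    refine Finset.sum_congr rfl fun i _ => ?_
    simp; ring

lemma decay_summable {n : ℕ} (Λc : AddSubgroup (EuclideanSpace ℝ (Fin n)))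
    [DiscreteTopology Λc] (hspan : Submodule.span ℝ (Λc : Set (EuclideanSpace ℝ (Fin n))) = ⊤)
    (f : EuclideanSpace ℝ (Fin n) → ℝ)
    (hdecay : ∃ C δ : ℝ, 0 < C ∧ 0 < δ ∧
      ∀ x : EuclideanSpace ℝ (Fin n), f x ≤ C * (1 + ‖x‖) ^ (-((n : ℝ) + δ)))
    (c : EuclideanSpace ℝ (Fin n)) (m : ℝ) (hm : 1 ≤ |m|) (R : ℝ) :
    ∃ u : Λc → ℝ, Summable u ∧ ∀ x, ‖x‖ ≤ R → ∀ l : Λc, f (c + m • (l + x)) ≤ u l := by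
  obtain ⟨C, δ, hC, hδ, hf⟩ := hdecay
  let L : Submodule ℤ (EuclideanSpace ℝ (Fin n)) := AddSubgroup.toIntSubmodule Λc
  have : DiscreteTopology L := inferInstanceAs (DiscreteTopology Λc)
  have : IsZLattice ℝ L := ⟨hspan⟩
  have hrank : Module.finrank ℤ L = n := by
    rw [ZLattice.rank ℝ L]; simp
  have hs : Summable fun z : Λc ↦ ‖z‖ ^ (-((n : ℝ) + δ)) :=
    ZLattice.summable_norm_rpow L (-((n : ℝ) + δ)) (by rw [hrank]; linarith)
  have hs2 : Summable fun z : Λc ↦ (1 + ‖z‖) ^ (-((n : ℝ) + δ)) := by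
    refine Summable.of_norm_bounded_eventually hs ?_
    refine (Set.finite_singleton (0 : Λc)).subset fun z hz => ?_
    by_contra h0
    apply hz
    have : 0 < ‖z‖ := norm_pos_iff.2 h0
    change ‖(1 + ‖z‖) ^ (-((n : ℝ) + δ))‖ ≤ ‖z‖ ^ (-((n : ℝ) + δ))
    rw [Real.norm_of_nonneg (by positivity)]
    exact Real.rpow_le_rpow_of_nonpos this (by linarith) (by have := n.cast_nonneg (α := ℝ); linarith)
  set R' := ‖c‖ + |m| * |R| with hR'
  have hR0 : 0 ≤ R' := by positivity
  refine ⟨fun l => C * (1 + R') ^ ((n : ℝ) + δ) * (1 + ‖l‖) ^ (-((n : ℝ) + δ)), hs2.mul_left _, ?_⟩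
  intro x hx l
  refine (hf _).trans ?_
  set y := c + m • ((l : EuclideanSpace ℝ (Fin n)) + x) with hy
  have hle : ‖l‖ ≤ ‖y‖ + R' := by
    have h1 : m • (l : EuclideanSpace ℝ (Fin n)) = y - c - m • x := by rw [hy]; module
    have h2 : ‖m • (l : EuclideanSpace ℝ (Fin n))‖ ≤ ‖y‖ + ‖c‖ + ‖m • x‖ := by
      rw [h1]
      exact (norm_sub_le _ _).trans (by gcongr; exact norm_sub_le _ _)
    rw [norm_smul, norm_smul, Real.norm_eq_abs] at h2
    have h3 : |m| * ‖x‖ ≤ |m| * |R| := by gcongr; exact hx.trans (le_abs_self _)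
    have h4 : ‖l‖ ≤ |m| * ‖(l : EuclideanSpace ℝ (Fin n))‖ :=
      le_mul_of_one_le_left (norm_nonneg _) hm
    linarith
  have h5 : 1 + ‖l‖ ≤ (1 + R') * (1 + ‖y‖) := by nlinarith [norm_nonneg y]
  have hp : 0 ≤ (n : ℝ) + δ := by positivity
  have h6 : ((1 + R') * (1 + ‖y‖)) ^ (-((n : ℝ) + δ)) ≤ (1 + ‖l‖) ^ (-((n : ℝ) + δ)) :=
    Real.rpow_le_rpow_of_nonpos (by positivity) h5 (by linarith)
  rw [Real.mul_rpow (by positivity) (by positivity)] at h6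
  simp only
  rw [mul_assoc]
  gcongr
  calc (1 + ‖y‖) ^ (-((n : ℝ) + δ)) = (1 + R') ^ ((n : ℝ) + δ) *
        ((1 + R') ^ (-((n : ℝ) + δ)) * (1 + ‖y‖) ^ (-((n : ℝ) + δ))) := by
        rw [← mul_assoc, ← Real.rpow_add (by positivity)]; simp
    _ ≤ _ := by gcongr

open FourierTransform in
lemma fourier_eq_charFn {n : ℕ} (f : EuclideanSpace ℝ (Fin n) → ℝ)
    (v : EuclideanSpace ℝ (Fin n)) :
    𝓕 (fun x => (f x : ℂ)) v = charFn f (-(2 * Real.pi) • v) := by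
  rw [Real.fourier_eq', charFn]
  refine integral_congr_ae (Filter.Eventually.of_forall fun y => ?_)
  simp only [smul_eq_mul]
  rw [mul_comm, real_inner_smul_left, real_inner_comm]
  push_cast
  congr 2
  ring

open FourierTransform in
lemma fourier_integrable {n : ℕ} (f : EuclideanSpace ℝ (Fin n) → ℝ) (hint : Integrable f)
    (R : ℝ) (hR : ∀ t, charFn f t ≠ 0 → ‖t‖ ≤ R) :
    Integrable (𝓕 (fun x => (f x : ℂ))) := by
  have hc : Continuous (𝓕 (fun x => (f x : ℂ))) := by
    exact VectorFourier.fourierIntegral_continuous Real.continuous_fourierChar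
      (by exact continuous_inner) hint.ofReal
  refine hc.integrable_of_hasCompactSupport ?_
  refine HasCompactSupport.intro (isCompact_closedBall (0 : EuclideanSpace ℝ (Fin n)) R) ?_
  intro v hv
  rw [fourier_eq_charFn]
  by_contra h
  apply hv
  have := hR _ h
  rw [norm_smul, norm_neg, Real.norm_of_nonneg (by positivity)] at this
  rw [mem_closedBall_zero_iff]
  nlinarith [Real.pi_gt_three, norm_nonneg v]

lemma charFn_affine {n : ℕ} (f : EuclideanSpace ℝ (Fin n) → ℝ)
    (c t : EuclideanSpace ℝ (Fin n)) (m : ℝ) (hm : m ≠ 0) (h : charFn f (m⁻¹ • t) = 0) :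
    ∫ s, (f (c + m • s) : ℂ) * Complex.exp ((⟪t, s⟫ : ℂ) * Complex.I) = 0 := by
  let G : EuclideanSpace ℝ (Fin n) → ℂ := fun u =>
    (f u : ℂ) * Complex.exp ((⟪t, m⁻¹ • (u - c)⟫ : ℂ) * Complex.I)
  have e1 : ∀ s, (f (c + m • s) : ℂ) * Complex.exp ((⟪t, s⟫ : ℂ) * Complex.I) = G (c + m • s) := by
    intro s
    simp [G, smul_smul, hm]
  simp_rw [e1]
  rw [Measure.integral_comp_smul volume (fun s => G (c + s)) m, integral_add_left_eq_self]
  convert smul_zero _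
  have e2 : ∀ u, G u = ((f u : ℂ) * Complex.exp ((⟪m⁻¹ • t, u⟫ : ℂ) * Complex.I)) *
      Complex.exp (-(⟪m⁻¹ • t, c⟫ : ℂ) * Complex.I) := by
    intro u
    simp only [G]
    rw [mul_assoc, ← Complex.exp_add]
    congr 2
    rw [inner_smul_right, inner_sub_right, real_inner_smul_left, real_inner_smul_left]
    push_cast
    ring
  simp_rw [e2]
  rw [integral_mul_const]
  rw [charFn] at h
  rw [h, zero_mul]

open FourierTransform in
lemma product_fourier_zero {n : ℕ} (f : EuclideanSpace ℝ (Fin n) → ℝ) (hcont : Continuous f)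
    (hint : Integrable f) (hF : Integrable (𝓕 (fun x => (f x : ℂ))))
    (c d t : EuclideanSpace ℝ (Fin n)) (m k : ℝ) (hm : m ≠ 0)
    (h : ∀ τ, charFn f τ = 0 ∨ charFn f (m⁻¹ • (t + k • τ)) = 0) :
    ∫ s, ((f (c + m • s) * f (d - k • s) : ℝ) : ℂ) *
      Complex.exp ((⟪t, s⟫ : ℂ) * Complex.I) = 0 := by
  have hinv : ∀ y, (f y : ℂ) = ∫ v, Complex.exp ((2 * Real.pi * ⟪v, y⟫ : ℝ) * Complex.I) *
      𝓕 (fun x => (f x : ℂ)) v := by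
    intro y
    have hfc : Continuous fun x => (f x : ℂ) := by fun_prop
    have := congrFun (hfc.fourierInv_fourier_eq hint.ofReal hF) y
    rw [← this, Real.fourierInv_eq']
    simp only [smul_eq_mul]
  have e1 : ∀ s, ((f (c + m • s) * f (d - k • s) : ℝ) : ℂ) *
      Complex.exp ((⟪t, s⟫ : ℂ) * Complex.I) =
      ∫ v, ((f (c + m • s) : ℂ) * 𝓕 (fun x => (f x : ℂ)) v) *
        Complex.exp ((2 * Real.pi * ⟪v, d - k • s⟫ + ⟪t, s⟫ : ℝ) * Complex.I) := by
    intro s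
    push_cast
    rw [hinv (d - k • s), mul_right_comm, ← integral_const_mul]
    refine integral_congr_ae (Filter.Eventually.of_forall fun v => ?_)
    simp only
    rw [add_mul, Complex.exp_add]
    push_cast
    ring
  simp_rw [e1]
  have hf' : Integrable fun s => (f (c + m • s) : ℂ) :=
    ((hint.comp_add_left c).comp_smul hm).ofReal
  rw [integral_integral_swap]
  · refine integral_eq_zero_of_ae (Filter.Eventually.of_forall fun v => ?_)
    simp only [Pi.zero_apply]
    have e2 : ∀ s, ((f (c + m • s) : ℂ) * 𝓕 (fun x => (f x : ℂ)) v) *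
        Complex.exp ((2 * Real.pi * ⟪v, d - k • s⟫ + ⟪t, s⟫ : ℝ) * Complex.I) =
        (𝓕 (fun x => (f x : ℂ)) v * Complex.exp ((2 * Real.pi * ⟪v, d⟫ : ℝ) * Complex.I)) *
        ((f (c + m • s) : ℂ) *
          Complex.exp ((⟪t + k • (-(2 * Real.pi) • v), s⟫ : ℂ) * Complex.I)) := by
      intro s
      have : ((2 * Real.pi * ⟪v, d - k • s⟫ + ⟪t, s⟫ : ℝ) : ℂ) * Complex.I =
        (2 * Real.pi * ⟪v, d⟫ : ℝ) * Complex.I +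
          (⟪t + k • (-(2 * Real.pi) • v), s⟫ : ℂ) * Complex.I := by
        rw [← add_mul, ← Complex.ofReal_add]
        congr 2
        simp only [inner_sub_right, inner_add_left, real_inner_smul_left, inner_smul_right]
        ring
      rw [this, Complex.exp_add]
      ring
    simp_rw [e2]
    rw [integral_const_mul]
    rcases h (-(2 * Real.pi) • v) with h | h
    · rw [fourier_eq_charFn, h]; simp
    · rw [charFn_affine f c _ m hm h, mul_zero]
  · have hp := hf'.mul_prod hF
    refine hp.mul_bdd (c := 1) ?_ (Filter.Eventually.of_forall fun z => ?_)
    · exact Continuous.aestronglyMeasurable (by fun_prop)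
    · rw [Complex.norm_exp_ofReal_mul_I]

lemma coset_eq {n : ℕ} (Λ Λc : AddSubgroup (EuclideanSpace ℝ (Fin n)))
    {u v : EuclideanSpace ℝ (Fin n)} (hu : u ∈ Λ) (hv : v ∈ Λ) :
    (QuotientAddGroup.mk (⟨u, hu⟩ : Λ) : Λ ⧸ Λc.addSubgroupOf Λ) =
      QuotientAddGroup.mk (⟨v, hv⟩ : Λ) ↔ u - v ∈ Λc := by
  rw [QuotientAddGroup.eq_iff_sub_mem, AddSubgroup.mem_addSubgroupOf]
  rfl

lemma cosetMass_eq {n : ℕ} (Λ Λc : AddSubgroup (EuclideanSpace ℝ (Fin n))) (hle : Λc ≤ Λ)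
    (f : EuclideanSpace ℝ (Fin n) → ℝ) (l₀ : EuclideanSpace ℝ (Fin n)) (hl : l₀ ∈ Λ) :
    cosetMass Λ Λc f (QuotientAddGroup.mk (⟨l₀, hl⟩ : Λ)) = ∑' l : Λc, f (l + l₀) := by
  let e : Λc → coset Λ Λc (QuotientAddGroup.mk (⟨l₀, hl⟩ : Λ)) := fun l =>
    ⟨l + l₀, Λ.add_mem (hle l.2) hl, by rw [coset_eq]; simp⟩
  have he : Function.Bijective e := by
    constructor
    · intro l l' h
      exact Subtype.ext (add_right_cancel (congrArg Subtype.val h))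
    · rintro ⟨u, hu, hu'⟩
      rw [coset_eq] at hu'
      exact ⟨⟨u - l₀, hu'⟩, by simp [e]⟩
  exact (Equiv.tsum_eq (Equiv.ofBijective e he)
    (fun u : coset Λ Λc (QuotientAddGroup.mk (⟨l₀, hl⟩ : Λ)) => f u)).symm

lemma exists_shift {n : ℕ} (Λ Λc : AddSubgroup (EuclideanSpace ℝ (Fin n)))
    [Finite (Λ ⧸ Λc.addSubgroupOf Λ)] (h₂ : ℤ)
    (horder : ∀ l ∈ Λ, l ∉ Λc → h₂ • l ∉ Λc) (r : EuclideanSpace ℝ (Fin n)) (hr : r ∈ Λ) :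
    ∃ l ∈ Λ, h₂ • l - r ∈ Λc := by
  have hinj : Function.Injective (fun q : Λ ⧸ Λc.addSubgroupOf Λ => h₂ • q) := by
    intro p q h
    induction p using QuotientAddGroup.induction_on with | H p => ?_
    induction q using QuotientAddGroup.induction_on with | H q => ?_
    obtain ⟨p, hp⟩ := p
    obtain ⟨q, hq⟩ := q
    rw [coset_eq]
    by_contra hc
    apply horder _ (Λ.sub_mem hp hq) hc
    have := (coset_eq Λ Λc (Λ.zsmul_mem hp h₂) (Λ.zsmul_mem hq h₂)).1 h
    rwa [zsmul_sub]
  obtain ⟨q, hq⟩ := Finite.surjective_of_injective hinj (QuotientAddGroup.mk ⟨r, hr⟩)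
  induction q using QuotientAddGroup.induction_on with | H q => ?_
  obtain ⟨q, hq'⟩ := q
  exact ⟨q, hq', (coset_eq Λ Λc (Λ.zsmul_mem hq' h₂) hr).1 hq⟩

lemma condDist_eq {n : ℕ} (Λ Λc : AddSubgroup (EuclideanSpace ℝ (Fin n))) (hle : Λc ≤ Λ)
    [Finite (Λ ⧸ Λc.addSubgroupOf Λ)]
    (h₁ h₂ : ℤ) (hh₂ : h₂ ≠ 0) (a b : ℤ) (hab : a * h₁ + b * h₂ = 1)
    (horder : ∀ l ∈ Λ, l ∉ Λc → h₂ • l ∉ Λc)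
    (f : EuclideanSpace ℝ (Fin n) → ℝ) (F : ℝ) (hF : ∀ c, cosetMass Λ Λc f c = F)
    (w : EuclideanSpace ℝ (Fin n)) (hw : w ∈ Λ)
    (hsum : ∀ l₀, Summable fun l : Λc => f ((a : ℝ) • w + (h₂ : ℝ) • (l + l₀)) *
      f ((b : ℝ) • w - (h₁ : ℝ) • (l + l₀)))
    (x : Λ ⧸ Λc.addSubgroupOf Λ) :
    ∃ l₀, condDist Λ Λc f h₁ h₂ x w = (1 / (Nat.card (Λ ⧸ Λc.addSubgroupOf Λ) : ℝ)) *
      ((∑' l : Λc, f ((a : ℝ) • w + (h₂ : ℝ) • (l + l₀)) *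
        f ((b : ℝ) • w - (h₁ : ℝ) • (l + l₀))) / (F * F)) := by
  induction x using QuotientAddGroup.induction_on with | H x => ?_
  obtain ⟨x, hx⟩ := x
  obtain ⟨l₀, hl₀, hl₀'⟩ := exists_shift Λ Λc h₂ horder (x - a • w)
    (Λ.sub_mem hx (Λ.zsmul_mem hw a))
  refine ⟨l₀, ?_⟩
  have habR : (a : ℝ) * h₁ + b * h₂ = 1 := by exact_mod_cast hab
  let S : (Λ ⧸ Λc.addSubgroupOf Λ) → Type := fun y =>
    {p : EuclideanSpace ℝ (Fin n) × EuclideanSpace ℝ (Fin n) //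
          p.1 ∈ coset Λ Λc (QuotientAddGroup.mk (⟨x, hx⟩ : Λ)) ∧ p.2 ∈ coset Λ Λc y ∧
            (h₁ : ℝ) • p.1 + (h₂ : ℝ) • p.2 = w}
  have hmemv : ∀ l : Λc, (b : ℝ) • w - (h₁ : ℝ) • (l + l₀) ∈ Λ := by
    intro l
    rw [Int.cast_smul_eq_zsmul, Int.cast_smul_eq_zsmul]
    exact Λ.sub_mem (Λ.zsmul_mem hw b) (Λ.zsmul_mem (Λ.add_mem (hle l.2) hl₀) _)
  have hmemu : ∀ l : Λc, (a : ℝ) • w + (h₂ : ℝ) • (l + l₀) ∈ Λ := by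
    intro l
    rw [Int.cast_smul_eq_zsmul, Int.cast_smul_eq_zsmul]
    exact Λ.add_mem (Λ.zsmul_mem hw a) (Λ.zsmul_mem (Λ.add_mem (hle l.2) hl₀) _)
  have hcoset : ∀ l : Λc, (a : ℝ) • w + (h₂ : ℝ) • ((l : EuclideanSpace ℝ (Fin n)) + l₀) - x ∈ Λc := by
    intro l
    rw [Int.cast_smul_eq_zsmul, Int.cast_smul_eq_zsmul]
    have : a • w + h₂ • ((l : EuclideanSpace ℝ (Fin n)) + l₀) - x =
      h₂ • (l : EuclideanSpace ℝ (Fin n)) + (h₂ • l₀ - (x - a • w)) := by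
      rw [zsmul_add]; abel
    rw [this]
    exact Λc.add_mem (Λc.zsmul_mem l.2 _) hl₀'
  let e : Λc → Σ y, S y := fun l =>
    ⟨QuotientAddGroup.mk (⟨(b : ℝ) • w - (h₁ : ℝ) • (l + l₀), hmemv l⟩ : Λ),
      ⟨((a : ℝ) • w + (h₂ : ℝ) • (l + l₀), (b : ℝ) • w - (h₁ : ℝ) • (l + l₀)),
        ⟨hmemu l, (coset_eq Λ Λc (hmemu l) hx).2 (hcoset l)⟩, ⟨hmemv l, rfl⟩, by
          calc _ = ((a : ℝ) * h₁ + b * h₂) • w := by dsimp only; module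
            _ = w := by rw [habR, one_smul]⟩⟩
  have hext : ∀ s s' : Σ y, S y, s.2.1 = s'.2.1 → s = s' := by
    rintro ⟨y, ⟨p, h1, ⟨hv, rfl⟩, h3⟩⟩ ⟨y', ⟨p', h1', ⟨hv', rfl⟩, h3'⟩⟩ h
    dsimp only at h
    subst h
    rfl
  have he : Function.Bijective e := by
    constructor
    · intro l l' h
      have h3 : (a : ℝ) • w + (h₂ : ℝ) • ((l : EuclideanSpace ℝ (Fin n)) + l₀) =
          (a : ℝ) • w + (h₂ : ℝ) • ((l' : EuclideanSpace ℝ (Fin n)) + l₀) :=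
        congrArg (fun s : Σ y, S y => s.2.1.1) h
      have h4 := smul_right_injective (EuclideanSpace ℝ (Fin n))
        (show (h₂ : ℝ) ≠ 0 by exact_mod_cast hh₂) (add_left_cancel h3)
      exact Subtype.ext (add_right_cancel h4)
    · rintro ⟨y, ⟨⟨u, v⟩, ⟨hu, hu'⟩, ⟨hv, rfl⟩, huv⟩⟩
      dsimp only at hu hu' hv huv
      rw [coset_eq] at hu'
      set l : EuclideanSpace ℝ (Fin n) := (b : ℝ) • u - (a : ℝ) • v with hl
      have hlm : l ∈ Λ := by
        rw [hl, Int.cast_smul_eq_zsmul, Int.cast_smul_eq_zsmul]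
        exact Λ.sub_mem (Λ.zsmul_mem hu b) (Λ.zsmul_mem hv a)
      have eu : (a : ℝ) • w + (h₂ : ℝ) • l = u := by
        calc _ = ((a : ℝ) * h₁ + b * h₂) • u := by rw [hl, ← huv]; module
          _ = u := by rw [habR, one_smul]
      have ev : (b : ℝ) • w - (h₁ : ℝ) • l = v := by
        calc _ = ((a : ℝ) * h₁ + b * h₂) • v := by rw [hl, ← huv]; module
          _ = v := by rw [habR, one_smul]
      have hlc : l - l₀ ∈ Λc := by
        by_contra hc
        apply horder _ (Λ.sub_mem hlm hl₀) hc
        rw [Int.cast_smul_eq_zsmul, Int.cast_smul_eq_zsmul] at eu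
        have : h₂ • (l - l₀) = (u - x) - (h₂ • l₀ - (x - a • w)) := by
          rw [← eu, zsmul_sub]; abel
        rw [this]
        exact Λc.sub_mem hu' hl₀'
      refine ⟨⟨l - l₀, hlc⟩, ?_⟩
      have ev' : (b : ℝ) • w - (h₁ : ℝ) • (l - l₀ + l₀) = v := by rw [sub_add_cancel, ev]
      have eu' : (a : ℝ) • w + (h₂ : ℝ) • (l - l₀ + l₀) = u := by rw [sub_add_cancel, eu]
      exact hext _ _ (Prod.ext eu' ev')
  let E := Equiv.ofBijective e he
  let T : (Σ y, S y) → ℝ := fun s => (f s.2.1.1 / F) * (f s.2.1.2 / F)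
  have hT : ∀ l, T (E l) = (f ((a : ℝ) • w + (h₂ : ℝ) • (l + l₀)) *
      f ((b : ℝ) • w - (h₁ : ℝ) • (l + l₀))) / (F * F) := by
    intro l
    exact div_mul_div_comm _ _ _ _
  have hTs : Summable T := by
    rw [← E.summable_iff]
    exact ((hsum l₀).div_const (F * F)).congr fun l => (hT l).symm
  unfold condDist
  congr 1
  simp only [hF]
  rw [← tsum_div_const]
  refine (hTs.tsum_sigma).symm.trans ?_
  rw [← E.tsum_eq]
  exact tsum_congr hT

lemma condDist_eq_zero {n : ℕ} (Λ Λc : AddSubgroup (EuclideanSpace ℝ (Fin n)))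
    (f : EuclideanSpace ℝ (Fin n) → ℝ) (h₁ h₂ : ℤ)
    (x : Λ ⧸ Λc.addSubgroupOf Λ) (w : EuclideanSpace ℝ (Fin n)) (hw : w ∉ Λ) :
    condDist Λ Λc f h₁ h₂ x w = 0 := by
  unfold condDist
  have : ∀ y, IsEmpty {p : EuclideanSpace ℝ (Fin n) × EuclideanSpace ℝ (Fin n) //
          p.1 ∈ coset Λ Λc x ∧ p.2 ∈ coset Λ Λc y ∧
            (h₁ : ℝ) • p.1 + (h₂ : ℝ) • p.2 = w} := by
    intro y
    refine ⟨fun ⟨p, ⟨hu, _⟩, ⟨hv, _⟩, h⟩ => hw ?_⟩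
    rw [← h, Int.cast_smul_eq_zsmul, Int.cast_smul_eq_zsmul]
    exact Λ.add_mem (Λ.zsmul_mem hu _) (Λ.zsmul_mem hv _)
  simp

/-- **perfect secrecy.** Let `Λc ⊆ Λ` be nested lattices in `ℝⁿ` with finite
quotient `Λ/Λc` of cardinality `M`, and let `h₁, h₂` be nonzero coprime integers such that no
nonzero element of `Λ/Λc` has order dividing `h₁` or `h₂`. Let `f` be a continuous, integrable
probability density with decay bound `f(x) ≤ C(1+‖x‖)^{−(n+δ)}`, whose characteristic function
`ψ` vanishes outside the interior of `(2/(|h₁|+|h₂|))·V(Λ̂c)`, and whose restriction to each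
coset of `Λc` in `Λ` is summable with finite positive total mass. Then the conditional
distributions of the relay's observation `W = h₁·U + h₂·V` given distinct messages coincide:
`P_x(w) = P_{x'}(w)` for all cosets `x, x'` and all `w`, i.e. `W` is independent of the
message. -/
theorem stmt_0 {n : ℕ} (Λ Λc : AddSubgroup (EuclideanSpace ℝ (Fin n)))
    [DiscreteTopology Λ] [DiscreteTopology Λc] (hle : Λc ≤ Λ)
    [Finite (Λ ⧸ Λc.addSubgroupOf Λ)] (M : ℕ) (hM : Nat.card (Λ ⧸ Λc.addSubgroupOf Λ) = M)
    (h₁ h₂ : ℤ) (hh₁ : h₁ ≠ 0) (hh₂ : h₂ ≠ 0) (hco : IsCoprime h₁ h₂)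
    (horder : ∀ l ∈ Λ, l ∉ Λc → h₁ • l ∉ Λc ∧ h₂ • l ∉ Λc)
    (f : EuclideanSpace ℝ (Fin n) → ℝ)
    (hcont : Continuous f) (hnonneg : ∀ x, 0 ≤ f x) (hint : Integrable f)
    (hprob : ∫ x, f x = 1)
    (hdecay : ∃ C δ : ℝ, 0 < C ∧ 0 < δ ∧
      ∀ x : EuclideanSpace ℝ (Fin n), f x ≤ C * (1 + ‖x‖) ^ (-((n : ℝ) + δ)))
    (hsupp : ∀ t : EuclideanSpace ℝ (Fin n),
      t ∉ interior ((2 / (|(h₁ : ℝ)| + |(h₂ : ℝ)|)) •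
          voronoi (fourierDual (Λc : Set (EuclideanSpace ℝ (Fin n))))) →
        charFn f t = 0)
    (hmass : ∀ c : Λ ⧸ Λc.addSubgroupOf Λ,
      Summable (fun u : coset Λ Λc c => f u) ∧ 0 < cosetMass Λ Λc f c) :
    ∀ (x x' : Λ ⧸ Λc.addSubgroupOf Λ) (w : EuclideanSpace ℝ (Fin n)),
      condDist Λ Λc f h₁ h₂ x w = condDist Λ Λc f h₁ h₂ x' w := by
  have hA₁ : (1 : ℝ) ≤ |(h₁ : ℝ)| := by exact_mod_cast Int.one_le_abs hh₁
  have hA₂ : (1 : ℝ) ≤ |(h₂ : ℝ)| := by exact_mod_cast Int.one_le_abs hh₂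
  have hh₂R : (h₂ : ℝ) ≠ 0 := by exact_mod_cast hh₂
  set α : ℝ := 2 / (|(h₁ : ℝ)| + |(h₂ : ℝ)|) with hα
  have hα0 : 0 < α := by positivity
  have hα1 : α ≤ 1 := by rw [hα, div_le_one (by positivity)]; linarith
  have hαm : (|(h₁ : ℝ)| + |(h₂ : ℝ)|) * α = 2 := by rw [hα]; field_simp
  have hsupp' : ∀ t, charFn f t ≠ 0 → t ∈ interior
      (α • voronoi (fourierDual (Λc : Set (EuclideanSpace ℝ (Fin n))))) := fun t ht => by
    by_contra h; exact ht (hsupp t h)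
  -- full rank
  have h0 : charFn f 0 ≠ 0 := by
    have : charFn f 0 = 1 := by
      simp only [charFn, inner_zero_left, Complex.ofReal_zero, zero_mul, Complex.exp_zero, mul_one]
      rw [integral_complex_ofReal, hprob, Complex.ofReal_one]
    rw [this]; exact one_ne_zero
  have hspan : Submodule.span ℝ (Λc : Set (EuclideanSpace ℝ (Fin n))) = ⊤ := by
    rw [← Submodule.orthogonal_eq_bot_iff, Submodule.eq_bot_iff]
    intro v hv
    by_contra hv0
    have hd : ∀ r : ℝ, r • v ∈ fourierDual (Λc : Set (EuclideanSpace ℝ (Fin n))) := by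
      intro r l hl
      refine ⟨0, ?_⟩
      rw [real_inner_smul_left, (Submodule.mem_orthogonal' _ _).1 hv l (Submodule.subset_span hl)]
      simp
    have hc : Filter.Tendsto (fun ε : ℝ => ε • v) (nhdsWithin 0 (Set.Ioi 0)) (nhds 0) := by
      have : Continuous (fun ε : ℝ => ε • v) := by fun_prop
      have := this.tendsto 0
      simp only [zero_smul] at this
      exact this.mono_left nhdsWithin_le_nhds
    have hev := (hc.eventually (mem_interior_iff_mem_nhds.1 (hsupp' 0 h0))).and self_mem_nhdsWithin
    obtain ⟨ε, ⟨y, hy, hyε⟩, hε0⟩ := hev.exists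
    have hε0' : 0 < ε := hε0
    simp only at hyε
    have hy' : y = (α⁻¹ * ε) • v := by
      rw [mul_smul, ← hyε, smul_smul, inv_mul_cancel₀ hα0.ne', one_smul]
    have := hy _ (hd (α⁻¹ * ε))
    rw [hy', sub_self, norm_zero, norm_le_zero_iff] at this
    have hne : α⁻¹ * ε ≠ 0 := by positivity
    exact (smul_ne_zero hne hv0) this
  obtain ⟨R, hR⟩ := voronoi_bounded Λc hspan
  have hF := fourier_integrable f hint (α * R) fun t ht => by
    obtain ⟨y, hy, rfl⟩ := interior_subset (hsupp' t ht)
    simp only [norm_smul, Real.norm_of_nonneg hα0.le]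
    gcongr
    exact hR y hy
  have hlat : ∀ t ∈ fourierDual (Λc : Set (EuclideanSpace ℝ (Fin n))), t ≠ 0 →
      ∀ τ, charFn f τ ≠ 0 → |⟪τ, t⟫| < α * ‖t‖ ^ 2 / 2 := fun t ht ht0 τ hτ =>
    mem_interior_abs_inner hα0 (hsupp' τ hτ) ht ht0
  -- the coset masses agree
  have hpf : ∀ x, ∑' l : Λc, f (l + x) = ∑' l : Λc, f l := by
    intro x
    have := poisson_lattice Λc hspan (fun x => (f x : ℂ)) (by fun_prop) hint.ofReal ?_ ?_ x
    · simp only [← Complex.ofReal_tsum] at this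
      exact_mod_cast this
    · intro R
      obtain ⟨u, hu, hu'⟩ := decay_summable Λc hspan f hdecay 0 1 (by simp) R
      refine ⟨u, hu, fun x hx l => ?_⟩
      have := hu' x hx l
      simp only [zero_add, one_smul] at this
      rwa [Complex.norm_real, Real.norm_of_nonneg (hnonneg _)]
    · intro t ht ht0
      by_contra hne
      have := hlat t ht ht0 t hne
      rw [real_inner_self_eq_norm_sq, abs_of_nonneg (by positivity)] at this
      have : 0 < ‖t‖ ^ 2 := by positivity
      nlinarith
  have hmassc : ∀ c, cosetMass Λ Λc f c = ∑' l : Λc, f l := by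
    intro c
    induction c using QuotientAddGroup.induction_on with | H c => ?_
    obtain ⟨c, hc⟩ := c
    rw [cosetMass_eq Λ Λc hle f c hc, hpf]
  obtain ⟨a, b, hab⟩ := hco
  intro x x' w
  by_cases hw : w ∈ Λ
  swap
  · rw [condDist_eq_zero _ _ _ _ _ _ _ hw, condDist_eq_zero _ _ _ _ _ _ _ hw]
  obtain ⟨K, hK⟩ : ∃ K, ∀ x, f x ≤ K := by
    obtain ⟨C, δ, hC, hδ, hf⟩ := hdecay
    refine ⟨C, fun x => (hf x).trans ?_⟩
    have : (1 + ‖x‖) ^ (-((n : ℝ) + δ)) ≤ 1 :=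
      Real.rpow_le_one_of_one_le_of_nonpos (by linarith [norm_nonneg x])
        (by have := n.cast_nonneg (α := ℝ); linarith)
    nlinarith
  have hK0 : 0 ≤ K := (hnonneg 0).trans (hK 0)
  let g : EuclideanSpace ℝ (Fin n) → ℝ := fun s =>
    f ((a : ℝ) • w + (h₂ : ℝ) • s) * f ((b : ℝ) • w - (h₁ : ℝ) • s)
  have hg0 : ∀ s, 0 ≤ g s := fun s => mul_nonneg (hnonneg _) (hnonneg _)
  have hgb : ∀ R : ℝ, ∃ u : Λc → ℝ, Summable u ∧ ∀ x, ‖x‖ ≤ R → ∀ l : Λc, g (l + x) ≤ u l := by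
    intro R
    obtain ⟨u, hu, hu'⟩ := decay_summable Λc hspan f hdecay ((a : ℝ) • w) h₂ hA₂ R
    refine ⟨fun l => u l * K, hu.mul_right K, fun x hx l => ?_⟩
    exact mul_le_mul (hu' x hx l) (hK _) (hnonneg _) ((hnonneg _).trans (hu' x hx l))
  have hgs : ∀ l₀, Summable fun l : Λc => g (l + l₀) := by
    intro l₀
    obtain ⟨u, hu, hu'⟩ := hgb ‖l₀‖
    exact Summable.of_nonneg_of_le (fun l => hg0 _) (fun l => hu' l₀ le_rfl l) hu
  have hgi : Integrable g := by
    have h1 : Integrable fun s => f ((a : ℝ) • w + (h₂ : ℝ) • s) :=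
      (hint.comp_add_left _).comp_smul hh₂R
    refine h1.mul_bdd (c := K) (Continuous.aestronglyMeasurable (by fun_prop))
      (Filter.Eventually.of_forall fun s => ?_)
    rw [Real.norm_of_nonneg (hnonneg _)]
    exact hK _
  have hpg : ∀ x, ∑' l : Λc, g (l + x) = ∑' l : Λc, g l := by
    intro x
    have := poisson_lattice Λc hspan (fun x => (g x : ℂ)) (by fun_prop) hgi.ofReal ?_ ?_ x
    · simp only [← Complex.ofReal_tsum] at this
      exact_mod_cast this
    · intro R
      obtain ⟨u, hu, hu'⟩ := hgb R
      refine ⟨u, hu, fun x hx l => ?_⟩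
      rw [Complex.norm_real, Real.norm_of_nonneg (hg0 _)]
      exact hu' x hx l
    · intro t ht ht0
      refine product_fourier_zero f hcont hint hF _ _ t h₂ h₁ hh₂R fun τ => ?_
      by_contra! hcon
      have e1 := hlat t ht ht0 _ hcon.1
      have e2 := hlat t ht ht0 _ hcon.2
      set σ := (h₂ : ℝ)⁻¹ • (t + (h₁ : ℝ) • τ) with hσ
      have e3 : t = (h₂ : ℝ) • σ - (h₁ : ℝ) • τ := by
        rw [hσ, smul_smul, mul_inv_cancel₀ hh₂R, one_smul, add_sub_cancel_right]
      have e4 : ‖t‖ ^ 2 = (h₂ : ℝ) * ⟪σ, t⟫ - h₁ * ⟪τ, t⟫ := by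
        rw [← real_inner_smul_left, ← real_inner_smul_left, ← inner_sub_left, ← e3,
          real_inner_self_eq_norm_sq]
      have e5 : (h₂ : ℝ) * ⟪σ, t⟫ ≤ |(h₂ : ℝ)| * |⟪σ, t⟫| := by
        rw [← abs_mul]; exact le_abs_self _
      have e6 : -((h₁ : ℝ) * ⟪τ, t⟫) ≤ |(h₁ : ℝ)| * |⟪τ, t⟫| := by
        rw [← abs_mul]; exact neg_le_abs _
      have e7 : |(h₂ : ℝ)| * |⟪σ, t⟫| < |(h₂ : ℝ)| * (α * ‖t‖ ^ 2 / 2) :=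
        mul_lt_mul_of_pos_left e2 (by linarith)
      have e8 : |(h₁ : ℝ)| * |⟪τ, t⟫| < |(h₁ : ℝ)| * (α * ‖t‖ ^ 2 / 2) :=
        mul_lt_mul_of_pos_left e1 (by linarith)
      have e9 : |(h₂ : ℝ)| * (α * ‖t‖ ^ 2 / 2) + |(h₁ : ℝ)| * (α * ‖t‖ ^ 2 / 2) = ‖t‖ ^ 2 := by
        linear_combination (‖t‖ ^ 2 / 2) * hαm
      linarith
  have hcd : ∀ x, condDist Λ Λc f h₁ h₂ x w = (1 / (Nat.card (Λ ⧸ Λc.addSubgroupOf Λ) : ℝ)) *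
      ((∑' l : Λc, g l) / ((∑' l : Λc, f l) * ∑' l : Λc, f l)) := by
    intro x
    obtain ⟨l₀, h⟩ := condDist_eq Λ Λc hle h₁ h₂ hh₂ a b hab (fun l hl hl' => (horder l hl hl').2)
      f _ hmassc w hw hgs x
    rw [h, ← hpg l₀]
  rw [hcd, hcd]

end
end

section
/- Let Λ be a full-rank lattice in ℝⁿ with covolume covol(Λ) and Fourier dual lattice Λ̂ = {t ∈ ℝⁿ : ⟨t, λ⟩ ∈ 2πℤ for all λ ∈ Λ}. Let f : ℝⁿ → ℝ be a continuous, nonnegative, integrable probability density satisfying a decay bound f(x) ≤ C(1+‖x‖)^{−(n+δ)} for some C, δ > 0, with characteristic function ψ(t) = ∫_{ℝⁿ} f(x) e^{i⟨t,x⟩} dx. If ψ(t) = 0 for all t outside the interior of the Voronoi region V(Λ̂) of Λ̂, then for every x ∈ ℝⁿ, Σ_{λ∈Λ} f(λ + x) = 1/covol(Λ). In particular, for each x the function u ↦ covol(Λ)·f(u) restricted to the coset Λ + x is a probability mass function. -/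
open scoped RealInnerProductSpace
open MeasureTheory

noncomputable section

open Module in
lemma aux_summable {n : ℕ} (Λ : Submodule ℤ (EuclideanSpace ℝ (Fin n)))
    [DiscreteTopology Λ] [IsZLattice ℝ Λ] (δ : ℝ) (hδ : 0 < δ) :
    Summable fun l : Λ => (1 + ‖(l : EuclideanSpace ℝ (Fin n))‖) ^ (-((n : ℝ) + δ)) := by
  have hr : -((n : ℝ) + δ) < -(Module.finrank ℤ Λ : ℝ) := by
    rw [ZLattice.rank ℝ Λ]; simp; exact hδ
  have h := ZLattice.summable_norm_rpow Λ _ hr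
  refine Summable.of_norm_bounded_eventually h ?_
  refine (Set.finite_singleton (0 : Λ)).subset ?_
  intro l hl
  by_contra hne
  apply hl
  have hne' : l ≠ 0 := hne
  have hpos : 0 < ‖l‖ := norm_pos_iff.mpr hne'
  change ‖(1 + ‖(l : EuclideanSpace ℝ (Fin n))‖) ^ (-((n : ℝ) + δ))‖ ≤ ‖l‖ ^ (-((n : ℝ) + δ))
  rw [Real.norm_of_nonneg (by positivity)]
  refine Real.rpow_le_rpow_of_nonpos hpos ?_ ?_
  · change ‖l‖ ≤ 1 + ‖l‖
    linarith
  · have : (0 : ℝ) ≤ n := Nat.cast_nonneg n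
    linarith

lemma aux_bound {n : ℕ} (C δ R : ℝ) (hC : 0 < C) (hδ : 0 < δ) (hR : 0 ≤ R)
    (f : EuclideanSpace ℝ (Fin n) → ℝ) (hnonneg : ∀ x, 0 ≤ f x)
    (hf : ∀ x : EuclideanSpace ℝ (Fin n), f x ≤ C * (1 + ‖x‖) ^ (-((n : ℝ) + δ)))
    (l x : EuclideanSpace ℝ (Fin n)) (hx : ‖x‖ ≤ R) :
    ‖f (l + x)‖ ≤ C * (1 + R) ^ ((n : ℝ) + δ) * (1 + ‖l‖) ^ (-((n : ℝ) + δ)) := by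
  rw [Real.norm_of_nonneg (hnonneg _)]
  refine (hf _).trans ?_
  rw [mul_assoc]
  refine mul_le_mul_of_nonneg_left ?_ hC.le
  have h1 : (1 + ‖l‖) / (1 + R) ≤ 1 + ‖l + x‖ := by
    rw [div_le_iff₀ (by positivity)]
    have : ‖l‖ ≤ ‖l + x‖ + ‖x‖ := by
      simpa using norm_sub_le (l + x) x
    nlinarith [norm_nonneg (l + x)]
  have h2 := Real.rpow_le_rpow_of_nonpos (x := (1 + ‖l‖) / (1 + R)) (by positivity) h1
    (z := -((n : ℝ) + δ)) (by have : (0 : ℝ) ≤ n := Nat.cast_nonneg n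
                              linarith)
  refine h2.trans (le_of_eq ?_)
  rw [Real.div_rpow (by positivity) (by positivity), Real.rpow_neg (x := 1 + R) (by positivity),
    div_inv_eq_mul, mul_comm]

lemma aux_cont {n : ℕ} (Λ : Submodule ℤ (EuclideanSpace ℝ (Fin n)))
    [DiscreteTopology Λ] [IsZLattice ℝ Λ] (f : EuclideanSpace ℝ (Fin n) → ℝ)
    (hcont : Continuous f) (hnonneg : ∀ x, 0 ≤ f x)
    (hdecay : ∃ C δ : ℝ, 0 < C ∧ 0 < δ ∧
      ∀ x : EuclideanSpace ℝ (Fin n), f x ≤ C * (1 + ‖x‖) ^ (-((n : ℝ) + δ))) :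
    Continuous fun x => ∑' l : Λ, f ((l : EuclideanSpace ℝ (Fin n)) + x) := by
  obtain ⟨C, δ, hC, hδ, hf⟩ := hdecay
  rw [continuous_iff_continuousAt]
  intro x₀
  have hon : ContinuousOn (fun x => ∑' l : Λ, f ((l : EuclideanSpace ℝ (Fin n)) + x))
      (Metric.ball 0 (‖x₀‖ + 1)) := by
    refine continuousOn_tsum (u := fun l : Λ => C * (1 + (‖x₀‖ + 1)) ^ ((n : ℝ) + δ) *
      (1 + ‖(l : EuclideanSpace ℝ (Fin n))‖) ^ (-((n : ℝ) + δ))) ?_ ?_ ?_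
    · intro l
      fun_prop
    · exact (aux_summable Λ δ hδ).mul_left _
    · intro l x hx
      exact aux_bound C δ _ hC hδ (by positivity) f hnonneg hf l x
        (by simpa using (mem_ball_zero_iff.mp hx).le)
  exact hon.continuousAt (Metric.isOpen_ball.mem_nhds (by simp))

lemma aux_unfold {n : ℕ} (Λ : Submodule ℤ (EuclideanSpace ℝ (Fin n)))
    [DiscreteTopology Λ] [IsZLattice ℝ Λ] (f : EuclideanSpace ℝ (Fin n) → ℝ)
    (hcont : Continuous f) (hint : Integrable f)
    (D : Set (EuclideanSpace ℝ (Fin n))) (hD : IsAddFundamentalDomain Λ D volume)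
    (t : EuclideanSpace ℝ (Fin n)) (ht : t ∈ fourierDual (Λ : Set (EuclideanSpace ℝ (Fin n)))) :
    ∫ x in D, ((∑' l : Λ, f ((l : EuclideanSpace ℝ (Fin n)) + x) : ℝ) : ℂ) *
      Complex.exp ((⟪t, x⟫ : ℂ) * Complex.I) = charFn f t := by
  have : MeasurableVAdd Λ (EuclideanSpace ℝ (Fin n)) :=
    (inferInstance : MeasurableVAdd Λ.toAddSubgroup (EuclideanSpace ℝ (Fin n)))
  have : VAddInvariantMeasure Λ (EuclideanSpace ℝ (Fin n)) volume :=
    (inferInstance : VAddInvariantMeasure Λ.toAddSubgroup (EuclideanSpace ℝ (Fin n)) volume)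
  have hexp : ∀ l : Λ, ∀ x : EuclideanSpace ℝ (Fin n),
      Complex.exp ((⟪t, (l : EuclideanSpace ℝ (Fin n)) + x⟫ : ℂ) * Complex.I) =
      Complex.exp ((⟪t, x⟫ : ℂ) * Complex.I) := by
    intro l x
    obtain ⟨k, hk⟩ := ht l l.2
    rw [inner_add_right, hk, Complex.exp_eq_exp_iff_exists_int]
    exact ⟨k, by push_cast; ring⟩
  have hnorm : ∀ x : EuclideanSpace ℝ (Fin n),
      ‖(f x : ℂ) * Complex.exp ((⟪t, x⟫ : ℂ) * Complex.I)‖ = ‖f x‖ := by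
    intro x
    rw [norm_mul, Complex.norm_exp_ofReal_mul_I, mul_one, Complex.norm_real]
  set h : EuclideanSpace ℝ (Fin n) → ℂ :=
    fun x => (f x : ℂ) * Complex.exp ((⟪t, x⟫ : ℂ) * Complex.I) with hh
  have hcont' : Continuous h := by
    rw [hh]; fun_prop
  have hi : Integrable h :=
    hint.norm.mono' hcont'.aestronglyMeasurable (Filter.Eventually.of_forall fun x => (hnorm x).le)
  unfold charFn
  change _ = ∫ x, h x
  rw [hD.integral_eq_tsum'' h hi, ← integral_tsum]
  · congr 1
    ext x
    rw [Complex.ofReal_tsum, ← tsum_mul_right]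
    refine tsum_congr fun l => ?_
    rw [← hexp l x]
    rfl
  · intro l
    have : Continuous fun x => h ((l : EuclideanSpace ℝ (Fin n)) + x) := by fun_prop
    exact this.aestronglyMeasurable
  · rw [← hD.lintegral_eq_tsum'' (fun x => ‖h x‖ₑ)]
    exact hi.2.ne

lemma aux_torus {ι : Type*} [Fintype ι] (g : (ι → ℝ) → ℂ) (hg : Continuous g)
    (hper : ∀ (y : ι → ℝ) (k : ι → ℤ), g (y + fun i => (k i : ℝ)) = g y)
    (hzero : ∀ m : ι → ℤ, m ≠ 0 →
      ∫ y in {y : ι → ℝ | ∀ i, y i ∈ Set.Ioc (0 : ℝ) 1},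
        Complex.exp ((∑ i, 2 * Real.pi * m i * y i : ℝ) * Complex.I) * g y = 0) :
    ∃ c : ℂ, ∀ y, g y = c := by
  let q : (ι → ℝ) → UnitAddTorus ι := fun y i => (y i : UnitAddCircle)
  have hq : IsOpenQuotientMap q :=
    IsOpenQuotientMap.piMap (fun _ : ι => QuotientAddGroup.isOpenQuotientMap_mk)
  have hfac : ∀ y y' : ι → ℝ, q y = q y' → g y = g y' := by
    intro y y' h
    have : ∀ i, ∃ k : ℤ, y i = y' i + k := by
      intro i
      have := congrFun h i
      obtain ⟨k, hk⟩ := (QuotientAddGroup.eq_iff_sub_mem.mp this)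
      refine ⟨k, ?_⟩
      simp at hk
      linarith
    choose k hk using this
    rw [← hper y' k]
    congr 1
    ext i
    exact hk i
  let G : C(UnitAddTorus ι, ℂ) :=
    ⟨fun z => g (Function.surjInv hq.surjective z), by
      rw [hq.isQuotientMap.continuous_iff]
      convert hg using 1
      ext y
      exact hfac _ _ (Function.surjInv_eq hq.surjective _)⟩
  have hG : ∀ y, G (q y) = g y := fun y => hfac _ _ (Function.surjInv_eq hq.surjective _)
  have hc : ∀ m : ι → ℤ, m ≠ 0 → UnitAddTorus.mFourierCoeff G m = 0 := by
    intro m hm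
    rw [UnitAddTorus.mFourierCoeff_eq_integral _ _ 0, ← hzero (-m) (neg_ne_zero.mpr hm)]
    simp only [Pi.zero_apply, zero_add]
    congr 1
    ext y
    rw [smul_eq_mul]
    congr 1
    · simp only [UnitAddTorus.mFourier, ContinuousMap.coe_mk, fourier_coe_apply]
      rw [← Complex.exp_sum]
      congr 1
      push_cast
      rw [Finset.sum_mul]
      refine Finset.sum_congr rfl fun i _ => ?_
      simp
      ring
    · exact hG y
  have hs : HasSum (UnitAddTorus.mFourierCoeff G) (UnitAddTorus.mFourierCoeff G 0) :=
    hasSum_single 0 hc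
  refine ⟨UnitAddTorus.mFourierCoeff G 0, fun y => ?_⟩
  have h1 := UnitAddTorus.hasSum_mFourier_series_apply_of_summable hs.summable (q y)
  have h2 := h1.unique (hasSum_single 0 fun m hm => by rw [hc m hm, zero_smul])
  rw [← hG y, h2]
  simp [UnitAddTorus.mFourier_zero]

/-- Let `Λ` be a full-rank lattice in `ℝⁿ` with covolume `covol(Λ)` and
Fourier dual lattice `Λ̂`. Let `f : ℝⁿ → ℝ` be a continuous, nonnegative, integrable
probability density satisfying a decay bound `f(x) ≤ C(1+‖x‖)^{−(n+δ)}` for some `C, δ > 0`,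
with characteristic function `ψ`. If `ψ(t) = 0` for all `t` outside the interior of the
Voronoi region of `Λ̂`, then for every `x ∈ ℝⁿ`, `Σ_{λ∈Λ} f(λ + x) = 1/covol(Λ)`; in
particular, for each `x` the function `u ↦ covol(Λ)·f(u)` restricted to the coset `Λ + x` is a
probability mass function. -/
theorem stmt_14 {n : ℕ} (Λ : Submodule ℤ (EuclideanSpace ℝ (Fin n)))
    [DiscreteTopology Λ] [IsZLattice ℝ Λ]
    (f : EuclideanSpace ℝ (Fin n) → ℝ)
    (hcont : Continuous f) (hnonneg : ∀ x, 0 ≤ f x) (hint : Integrable f)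
    (hprob : ∫ x, f x = 1)
    (hdecay : ∃ C δ : ℝ, 0 < C ∧ 0 < δ ∧
      ∀ x : EuclideanSpace ℝ (Fin n), f x ≤ C * (1 + ‖x‖) ^ (-((n : ℝ) + δ)))
    (hsupp : ∀ t : EuclideanSpace ℝ (Fin n),
      t ∉ interior (voronoi (fourierDual (Λ : Set (EuclideanSpace ℝ (Fin n))))) →
        charFn f t = 0) :
    ∀ x : EuclideanSpace ℝ (Fin n),
      ∑' l : Λ, f ((l : EuclideanSpace ℝ (Fin n)) + x) = 1 / ZLattice.covolume Λ := by
  classical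
  let E := EuclideanSpace ℝ (Fin n)
  have hfree := ZLattice.module_free ℝ Λ
  have hfin := ZLattice.module_finite ℝ Λ
  let b := Module.Free.chooseBasis ℤ Λ
  let B := b.ofZLatticeBasis ℝ
  let ι := Module.Free.ChooseBasisIndex ℤ Λ
  let D : Set E := ZSpan.fundamentalDomain B
  have hD : IsAddFundamentalDomain Λ D volume := ZLattice.isAddFundamentalDomain b volume
  let F : E → ℝ := fun x => ∑' l : Λ, f ((l : E) + x)
  have hF : Continuous F := aux_cont Λ f hcont hnonneg hdecay
  have hFper : ∀ (x : E) (k : Λ), F (x + k) = F x := by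
    intro x k
    change ∑' l : Λ, f ((l : E) + (x + k)) = ∑' l : Λ, f ((l : E) + x)
    rw [← (Equiv.addRight k).tsum_eq (fun l : Λ => f ((l : E) + x))]
    refine tsum_congr fun l => ?_
    congr 1
    simp
    abel
  let φ : (ι → ℝ) ≃L[ℝ] E := B.equivFun.symm.toContinuousLinearEquiv
  have hφ : ∀ y, φ y = ∑ i, y i • B i := fun y => B.equivFun_symm_apply y
  have hcube : φ ⁻¹' D =ᵐ[volume] {y : ι → ℝ | ∀ i, y i ∈ Set.Ioc (0 : ℝ) 1} := by
    have e1 : φ ⁻¹' D = Set.pi Set.univ fun _ : ι => Set.Ico (0 : ℝ) 1 := by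
      ext y
      simp only [D, Set.mem_preimage, ZSpan.mem_fundamentalDomain, Set.mem_univ_pi]
      refine forall_congr' fun i => ?_
      have : B.repr (φ y) i = y i := by
        exact congrFun (B.equivFun.apply_symm_apply y) i
      rw [this]
    have e2 : {y : ι → ℝ | ∀ i, y i ∈ Set.Ioc (0 : ℝ) 1} =
        Set.pi Set.univ fun _ : ι => Set.Ioc (0 : ℝ) 1 := by
      ext y; simp [Set.mem_univ_pi]
    rw [e1, e2]
    exact (Measure.univ_pi_Ico_ae_eq_Icc (f := fun _ => 0) (g := fun _ => 1)).trans
      (Measure.univ_pi_Ioc_ae_eq_Icc (f := fun _ => 0) (g := fun _ => 1)).symm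
  obtain ⟨c, hc⟩ : ∃ c : ℂ, ∀ y, ((F (φ y) : ℝ) : ℂ) = c := by
    refine aux_torus (fun y => ((F (φ y) : ℝ) : ℂ)) (by fun_prop) ?_ ?_
    · intro y k
      have : φ (y + fun i => (k i : ℝ)) = φ y + ((∑ i, k i • b i : Λ) : E) := by
        rw [map_add, hφ (fun i => (k i : ℝ))]
        simp [B, Int.cast_smul_eq_zsmul]
      simp only [this, hFper]
    · intro m hm
      let ℓ : E →ₗ[ℝ] ℝ := B.constr ℝ (fun i => 2 * Real.pi * (m i : ℝ))
      let t : E := (InnerProductSpace.toDual ℝ E).symm (LinearMap.toContinuousLinearMap ℓ)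
      have htx : ∀ x : E, ⟪t, x⟫ = ℓ x := fun x => by simp [t]
      have htB : ∀ i, ⟪t, B i⟫ = 2 * Real.pi * (m i : ℝ) := fun i => by
        rw [htx]; simp [ℓ]
      have htφ : ∀ y, ⟪t, φ y⟫ = ∑ i, 2 * Real.pi * m i * y i := by
        intro y
        rw [hφ, inner_sum]
        refine Finset.sum_congr rfl fun i _ => ?_
        rw [inner_smul_right, htB]; ring
      have htd : t ∈ fourierDual (Λ : Set E) := by
        intro l hl
        refine ⟨∑ i, b.repr ⟨l, hl⟩ i * m i, ?_⟩
        have h1 : l = ∑ i, ((b.repr ⟨l, hl⟩ i : ℤ) : ℝ) • B i := by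
          have := congrArg (Subtype.val) (b.sum_repr ⟨l, hl⟩)
          rw [Submodule.coe_sum] at this
          refine this.symm.trans (Finset.sum_congr rfl fun i _ => ?_)
          simp [B, Int.cast_smul_eq_zsmul]
        conv_lhs => rw [h1, inner_sum]
        push_cast
        rw [Finset.mul_sum]
        refine Finset.sum_congr rfl fun i _ => ?_
        rw [inner_smul_right, htB]; ring
      have ht0 : t ≠ 0 := by
        intro h0
        obtain ⟨i, hi⟩ := Function.ne_iff.mp hm
        have := htB i
        rw [h0, inner_zero_left] at this
        have hp := Real.pi_pos.ne'
        have : (m i : ℝ) = 0 := by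
          rcases mul_eq_zero.mp this.symm with h | h
          · exact absurd h (by positivity)
          · exact h
        exact hi (by exact_mod_cast this)
      have hψ : charFn f t = 0 := by
        refine hsupp t fun hmem => ht0 ?_
        have := interior_subset hmem t htd
        simpa using this
      have hun := aux_unfold Λ f hcont hint D hD t htd
      rw [hψ] at hun
      rw [← setIntegral_congr_set hcube]
      let H : E → ℂ := fun x => (F x : ℂ) * Complex.exp ((⟪t, x⟫ : ℂ) * Complex.I)
      have hmap : ∫ y in φ ⁻¹' D, H (φ y) = ∫ x in D, H x ∂(Measure.map φ volume) := by
        exact (MeasurableEmbedding.setIntegral_map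
          φ.toHomeomorph.measurableEmbedding H D).symm
      have hhaar : (Measure.map φ volume).IsAddHaarMeasure :=
        φ.isAddHaarMeasure_map volume
      have hsm := Measure.isAddLeftInvariant_eq_smul (Measure.map φ volume) (volume : Measure E)
      have hH : ∫ x in D, H x = 0 := hun
      rw [hsm, Measure.restrict_smul, integral_smul_nnreal_measure, hH, smul_zero] at hmap
      rw [← hmap]
      congr 1
      ext y
      rw [← htφ, mul_comm]
  have hcF : ∀ x, (F x : ℂ) = c := fun x => by simpa using hc (φ.symm x)
  have h0 := aux_unfold Λ f hcont hint D hD 0 (fun l _ => ⟨0, by simp⟩)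
  have h1 : charFn f 0 = 1 := by
    simp only [charFn, inner_zero_left, Complex.ofReal_zero, zero_mul, Complex.exp_zero, mul_one]
    rw [integral_complex_ofReal, hprob, Complex.ofReal_one]
  have h2 : ZLattice.covolume Λ = volume.real D :=
    ZLattice.covolume_eq_measure_fundamentalDomain Λ volume hD
  intro x
  have h3 : (volume.real D : ℂ) * (F x : ℂ) = 1 := by
    rw [← h1, ← h0]
    simp only [inner_zero_left, Complex.ofReal_zero, zero_mul, Complex.exp_zero, mul_one]
    rw [setIntegral_congr_fun (g := fun _ => (F x : ℂ))
      (ZSpan.fundamentalDomain_measurableSet B) (fun z _ => (hcF z).trans (hcF x).symm)]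
    simp [D]
  have h4 : volume.real D * F x = 1 := by exact_mod_cast h3
  change F x = _
  rw [h2, eq_div_iff (left_ne_zero_of_mul_eq_one h4), mul_comm, h4]

end
end
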